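/- For every integer m ≥ 2 there is a constant C > 0, depending only on f, D and m, such that for every ν ∈ (0,1] and every t > 0, the solution satisfies ‖u(t)‖_m² ≤ C max(ν^{−(2m−1)}, t^{−(2m−1)}). -/

import Mathlib

/-!
By the maximum principle for `u_x`, the convexity of `f` preserves the one-sided bound `u_x ≤ D`.
Since `u_x` has mean zero, its `L¹` norm is then at most `2 D`, and interpolation gives
`‖u‖_{k+1}^{2(2k+3)} ≤ 64 D⁴ ‖u‖_{k+2}^{2(2k+1)}`. Consequently all derivatives of order at most
`m` are controlled by powers of one inverse length `R` with `R^{2m-1} ≈ ‖u‖_m²`, so that the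
nonlinear term of the energy identity satisfies `‖f ∘ u‖_m² ≤ C ‖u‖_m²` and
`d/dt ‖u‖_m² ≤ -ν ‖u‖_{m+1}² + (C / ν) ‖u‖_m²`. Together with the interpolation inequality this is
superlinear damping, and the maximum of `(s - s₀)^{2m-1} ‖u(s)‖_m²` on `[s₀, t]` is bounded
independently of the data as soon as `t - s₀ ≤ ν`.
-/

open MeasureTheory Set
open scoped ENNReal

/-- The `L^p` norm (on the circle, i.e. over one period `(0,1]`) of the `m`-th
derivative of a function `v : ℝ → ℝ` (identified with a function on `S¹ = ℝ/ℤ`). -/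
noncomputable def sobLp (m : ℕ) (p : ℝ≥0∞) (v : ℝ → ℝ) : ℝ :=
  (eLpNorm (iteratedDeriv m v) p (volume.restrict (Ioc (0:ℝ) 1))).toReal

/-- `u` is a smooth, space-periodic, zero-mean-value solution of the generalised
Burgers equation `u_t + f'(u) u_x - ν u_xx = 0` with strongly convex `f` and
nonzero initial condition. -/
structure IsBurgersSolution (f : ℝ → ℝ) (σ ν : ℝ) (u : ℝ → ℝ → ℝ) : Prop where
  hf : ContDiff ℝ (⊤ : ℕ∞) f
  hσ : 0 < σ
  hconv : ∀ y, σ ≤ iteratedDeriv 2 f y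
  hν : 0 < ν
  hu : ContDiffOn ℝ (⊤ : ℕ∞) (Function.uncurry u) (Ici (0:ℝ) ×ˢ univ)
  hper : ∀ t x, u t (x + 1) = u t x
  hpde : ∀ t, 0 < t → ∀ x,
    deriv (fun s => u s x) t + deriv f (u t x) * deriv (u t) x
      - ν * deriv (deriv (u t)) x = 0
  hmean : ∀ t, 0 ≤ t → ∫ x in Ioc (0:ℝ) 1, u t x = 0
  hinit : ∃ x, u 0 x ≠ 0

/-- The quantity `D = max(|u₀|₁⁻¹, |u₀|_{1,∞})`. -/
noncomputable def burgersD (u : ℝ → ℝ → ℝ) : ℝ :=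
  max (sobLp 0 1 (u 0))⁻¹ (sobLp 1 ⊤ (u 0))

/-- `T₁ = D⁻² C̃⁻¹ / 4`. -/
noncomputable def burgersT₁ (D Ct : ℝ) : ℝ := (D ^ 2)⁻¹ * Ct⁻¹ / 4

/-- `T₂ = max(3T₁/2, 2Dσ⁻¹)`. -/
noncomputable def burgersT₂ (σ D Ct : ℝ) : ℝ :=
  max (3 / 2 * burgersT₁ D Ct) (2 * D * σ⁻¹)

/-- Time average over `[T₁, T₂]`. -/
noncomputable def timeAvg (T₁ T₂ : ℝ) (A : ℝ → ℝ) : ℝ :=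
  (T₂ - T₁)⁻¹ * ∫ t in T₁..T₂, A t

/-- The structure function `S_p(ℓ)`. -/
noncomputable def structFun (T₁ T₂ : ℝ) (u : ℝ → ℝ → ℝ) (p ℓ : ℝ) : ℝ :=
  timeAvg T₁ T₂ (fun t => ∫ x in Ioc (0:ℝ) 1, |u t (x + ℓ) - u t x| ^ p)

section IntervalCalculus

variable {a b x z : ℝ} {f f' f'' g g' : ℝ → ℝ}

lemma sq_integral_mul_le (hab : a ≤ b) (hf : Continuous f) (hg : Continuous g) :
    (∫ x in a..b, f x * g x) ^ 2 ≤ (∫ x in a..b, f x ^ 2) * ∫ x in a..b, g x ^ 2 := by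
  have quadratic_nonneg (s : ℝ) : 0 ≤ (∫ x in a..b, g x ^ 2) * (s * s)
      + (2 * ∫ x in a..b, f x * g x) * s + ∫ x in a..b, f x ^ 2 := by
    have hsq : 0 ≤ ∫ x in a..b, (g x ^ 2 * (s * s) + 2 * (f x * g x) * s + f x ^ 2) :=
      intervalIntegral.integral_nonneg hab fun x _ => by nlinarith [sq_nonneg (f x + s * g x)]
    rwa [intervalIntegral.integral_add (Continuous.intervalIntegrable (by fun_prop) _ _)
        (Continuous.intervalIntegrable (by fun_prop) _ _),
      intervalIntegral.integral_add (Continuous.intervalIntegrable (by fun_prop) _ _)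
        (Continuous.intervalIntegrable (by fun_prop) _ _),
      intervalIntegral.integral_mul_const, intervalIntegral.integral_mul_const,
      intervalIntegral.integral_const_mul] at hsq
  have hdiscrim := discrim_le_zero quadratic_nonneg
  unfold discrim at hdiscrim
  linarith

lemma integral_mul_deriv_eq_neg_of_endpoints (hf : ∀ x, HasDerivAt f (f' x) x)
    (hg : ∀ x, HasDerivAt g (g' x) x) (hf' : Continuous f') (hg' : Continuous g')
    (hends : f b * g b = f a * g a) :
    ∫ x in a..b, f x * g' x = -∫ x in a..b, f' x * g x := by
  rw [intervalIntegral.integral_mul_deriv_eq_deriv_mul (fun x _ => hf x) (fun x _ => hg x)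
    (hf'.intervalIntegrable _ _) (hg'.intervalIntegrable _ _), hends, sub_self, zero_sub]

lemma sq_integral_sq_deriv_le (hab : a ≤ b) (hf : ∀ x, HasDerivAt f (f' x) x)
    (hf' : ∀ x, HasDerivAt f' (f'' x) x) (hf'' : Continuous f'')
    (hends : f b * f' b = f a * f' a) :
    (∫ x in a..b, f' x ^ 2) ^ 2 ≤ (∫ x in a..b, f x ^ 2) * ∫ x in a..b, f'' x ^ 2 := by
  have cf : Continuous f := continuous_iff_continuousAt.2 fun x => (hf x).continuousAt
  have cf' : Continuous f' := continuous_iff_continuousAt.2 fun x => (hf' x).continuousAt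
  calc (∫ x in a..b, f' x ^ 2) ^ 2 = (∫ x in a..b, f x * f'' x) ^ 2 := by
        rw [integral_mul_deriv_eq_neg_of_endpoints hf hf' cf' hf'' hends, neg_sq]
        simp only [sq]
    _ ≤ _ := sq_integral_mul_le hab cf hf''

lemma abs_le_integral_abs_deriv_of_eq_zero (hf : ∀ x, HasDerivAt f (f' x) x)
    (hf' : Continuous f') (hz : z ∈ Icc a b) (hfz : f z = 0) (hx : x ∈ Icc a b) :
    |f x| ≤ ∫ y in a..b, |f' y| := by
  have hab : a ≤ b := hz.1.trans hz.2
  have hftc : ∫ y in z..x, f' y = f x := by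
    rw [intervalIntegral.integral_eq_sub_of_hasDerivAt (fun y _ => hf y)
      (hf'.intervalIntegrable _ _), hfz, sub_zero]
  calc |f x| ≤ |(∫ y in z..x, |f' y|)| := by
        simpa only [hftc, Real.norm_eq_abs] using
          intervalIntegral.norm_integral_le_abs_integral_norm (f := f') (a := z) (b := x)
            (μ := volume)
    _ ≤ |(∫ y in a..b, |f' y|)| :=
        intervalIntegral.abs_integral_mono_interval
          (uIoc_subset_uIoc_of_uIcc_subset_uIcc
            (uIcc_subset_uIcc (by rwa [uIcc_of_le hab]) (by rwa [uIcc_of_le hab])))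
          (.of_forall fun _ => abs_nonneg _) (hf'.abs.intervalIntegrable _ _)
    _ = ∫ y in a..b, |f' y| :=
        abs_of_nonneg (intervalIntegral.integral_nonneg hab fun _ _ => abs_nonneg _)

lemma pow_four_le_of_eq_zero (hf : ∀ x, HasDerivAt f (f' x) x) (hf' : Continuous f')
    (hz : z ∈ Icc a b) (hfz : f z = 0) (hx : x ∈ Icc a b) :
    f x ^ 4 ≤ 4 * (∫ y in a..b, f y ^ 2) * ∫ y in a..b, f' y ^ 2 := by
  have cf : Continuous f := continuous_iff_continuousAt.2 fun x => (hf x).continuousAt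
  have hsq_deriv (y : ℝ) : HasDerivAt (fun y => f y ^ 2) (2 * f y * f' y) y := by
    simpa using (hf y).fun_pow 2
  have hsq_le : f x ^ 2 ≤ 2 * ∫ y in a..b, |f y| * |f' y| := by
    have h := abs_le_integral_abs_deriv_of_eq_zero hsq_deriv (by fun_prop) hz (by simp [hfz]) hx
    simpa [abs_mul, mul_assoc] using h
  calc f x ^ 4 = (f x ^ 2) ^ 2 := by ring
    _ ≤ (2 * ∫ y in a..b, |f y| * |f' y|) ^ 2 := by gcongr
    _ ≤ 4 * (∫ y in a..b, f y ^ 2) * ∫ y in a..b, f' y ^ 2 := by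
        have h := sq_integral_mul_le (hz.1.trans hz.2) cf.abs hf'.abs
        simp only [sq_abs] at h
        linarith

lemma hasDerivWithinAt_nonneg_of_isMaxOn_right {φ : ℝ → ℝ} {φ' : ℝ} (hab : a < b)
    (hφ : HasDerivWithinAt φ φ' (Icc a b) b) (hmax : IsMaxOn φ (Icc a b) b) : 0 ≤ φ' := by
  have htangent : a - b ∈ posTangentConeAt (Icc a b) b :=
    sub_mem_posTangentConeAt_of_segment_subset
      ((convex_Icc a b).segment_subset (right_mem_Icc.2 hab.le) (left_mem_Icc.2 hab.le))
  have h := hmax.localize.hasFDerivWithinAt_nonpos hφ.hasFDerivWithinAt htangent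
  simp only [ContinuousLinearMap.toSpanSingleton_apply, smul_eq_mul] at h
  nlinarith

lemma deriv_deriv_nonpos_of_isLocalMax (hf : ContinuousAt f x) (hmax : IsLocalMax f x) :
    deriv (deriv f) x ≤ 0 := by
  by_contra! hpos
  have hmin := isLocalMin_of_deriv_deriv_pos hpos hmax.deriv_eq_zero hf
  have hconst : f =ᶠ[nhds x] fun _ => f x := by
    filter_upwards [hmax, hmin] with y hy hy' using le_antisymm hy hy'
  simp [hconst.deriv.deriv_eq] at hpos

end IntervalCalculus

lemma le_of_parabolic_maximum_principle {X : Type*} [TopologicalSpace X] {K : Set X}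
    (hK : IsCompact K) {T D : ℝ} {w w' : ℝ → X → ℝ}
    (hcont : ContinuousOn (Function.uncurry w) (Icc 0 T ×ˢ K))
    (hderiv : ∀ t ∈ Ioc 0 T, ∀ x ∈ K, HasDerivAt (fun s => w s x) (w' t x) t)
    (hmax : ∀ t ∈ Ioc 0 T, ∀ x ∈ K, IsMaxOn (w t) K x → w' t x ≤ 0)
    (hinit : ∀ x ∈ K, w 0 x ≤ D) {t : ℝ} (ht : t ∈ Icc 0 T) {x : X} (hx : x ∈ K) :
    w t x ≤ D := by
  by_contra! hlt
  -- Subtracting `ε t` makes the time derivative at the maximum strictly negative.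
  obtain ⟨ε, hε, hεt⟩ : ∃ ε > 0, ε * t < w t x - D := by
    have ht1 : 0 < t + 1 := by linarith [ht.1]
    refine ⟨(w t x - D) / (t + 1), div_pos (sub_pos.2 hlt) ht1, ?_⟩
    rw [div_mul_eq_mul_div, div_lt_iff₀ ht1]
    linarith
  have hcont' : ContinuousOn (fun p : ℝ × X => w p.1 p.2 - ε * p.1) (Icc 0 T ×ˢ K) :=
    hcont.sub (by fun_prop)
  obtain ⟨⟨s, y⟩, ⟨hs, hy⟩, hsy⟩ :=
    (isCompact_Icc.prod hK).exists_isMaxOn ⟨(t, x), ht, hx⟩ hcont'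
  have hle (r : ℝ) (hr : r ∈ Icc 0 T) (z : X) (hz : z ∈ K) :
      w r z - ε * r ≤ w s y - ε * s := hsy (show (r, z) ∈ Icc 0 T ×ˢ K from ⟨hr, hz⟩)
  rcases hs.1.eq_or_lt with rfl | hs0
  · have := hle t ht x hx
    have := hinit y hy
    linarith
  · have hs' : s ∈ Ioc 0 T := ⟨hs0, hs.2⟩
    have hspace : w' s y ≤ 0 := hmax s hs' y hy fun z hz => by
      have := hle s hs z hz
      simp only [mem_ofPred_eq]
      linarith
    have htime : 0 ≤ w' s y - ε * 1 :=
      hasDerivWithinAt_nonneg_of_isMaxOn_right hs0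
        ((hderiv s hs' y hy).sub ((hasDerivAt_id s).const_mul ε)).hasDerivWithinAt
        fun r hr => hle r ⟨hr.1, hr.2.trans hs.2⟩ y hy
    linarith

lemma deriv_ge_of_isMaxOn_sub_pow_mul {y : ℝ → ℝ} {y' s₀ s : ℝ} {q : ℕ} (hs : s₀ < s)
    (hy : HasDerivAt y y' s) (hmax : IsMaxOn (fun r => (r - s₀) ^ q * y r) (Icc s₀ s) s) :
    -(q * y s) ≤ (s - s₀) * y' := by
  have hφ := (((hasDerivAt_id' s).sub_const s₀).fun_pow q).fun_mul hy
  have hnonneg := hasDerivWithinAt_nonneg_of_isMaxOn_right hs hφ.hasDerivWithinAt hmax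
  have hpos : 0 < s - s₀ := sub_pos.2 hs
  have hfactor : (s - s₀) * (q * (s - s₀) ^ (q - 1) * 1 * y s + (s - s₀) ^ q * y')
      = (s - s₀) ^ q * (q * y s + (s - s₀) * y') := by
    cases q with
    | zero => simp
    | succ n => rw [Nat.add_sub_cancel]; ring
  have := nonneg_of_mul_nonneg_right (hfactor ▸ mul_nonneg hpos.le hnonneg) (pow_pos hpos q)
  linarith

lemma sq_pow_mul_le_of_pow_le {θ y b K L : ℝ} {q : ℕ} (hK : 0 ≤ K) (hL : 0 ≤ L) (hy : 0 ≤ y)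
    (hb : 0 ≤ b) (hyb : y ^ (q + 2) ≤ K * b ^ q) (hθ : θ ^ 2 * b ≤ L * y) :
    (θ ^ q * y) ^ 2 ≤ K * L ^ q := by
  rcases hy.eq_or_lt with rfl | hypos
  · rw [mul_zero, zero_pow two_ne_zero]
    positivity
  refine le_of_mul_le_mul_left ?_ (pow_pos hypos q)
  calc y ^ q * (θ ^ q * y) ^ 2 = (θ ^ 2) ^ q * y ^ (q + 2) := by
        rw [← pow_mul, mul_comm 2 q]; ring
    _ ≤ (θ ^ 2) ^ q * (K * b ^ q) := by gcongr
    _ = K * (θ ^ 2 * b) ^ q := by rw [mul_pow]; ring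
    _ ≤ K * (L * y) ^ q := by gcongr
    _ = y ^ q * (K * L ^ q) := by rw [mul_pow]; ring

lemma sq_sub_pow_mul_le_of_deriv_le {y y' b : ℝ → ℝ} {s₀ t ν C K : ℝ} {q : ℕ} (hq : q ≠ 0)
    (hs₀t : s₀ < t) (hν : t - s₀ ≤ ν) (hC : 0 ≤ C) (hK : 0 ≤ K)
    (hderiv : ∀ s ∈ Icc s₀ t, HasDerivAt y (y' s) s) (hy : ∀ s ∈ Icc s₀ t, 0 ≤ y s)
    (hb : ∀ s ∈ Icc s₀ t, 0 ≤ b s) (hyb : ∀ s ∈ Icc s₀ t, y s ^ (q + 2) ≤ K * b s ^ q)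
    (hy' : ∀ s ∈ Icc s₀ t, y' s ≤ -(ν * b s) + C / ν * y s) :
    ((t - s₀) ^ q * y t) ^ 2 ≤ K * (C + q) ^ q := by
  -- At the maximum of `(s - s₀) ^ q * y s` the differential inequality becomes algebraic.
  obtain ⟨s, hs, hmax⟩ := isCompact_Icc.exists_isMaxOn (nonempty_Icc.2 hs₀t.le)
    (f := fun s => (s - s₀) ^ q * y s) <| (by fun_prop : ContinuousOn _ _).mul fun s hs =>
      (hderiv s hs).continuousAt.continuousWithinAt
  suffices hsup : ((s - s₀) ^ q * y s) ^ 2 ≤ K * (C + q) ^ q by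
    have htt : t ∈ Icc s₀ t := right_mem_Icc.2 hs₀t.le
    exact (pow_le_pow_left₀ (mul_nonneg (pow_nonneg (sub_nonneg.2 hs₀t.le) q) (hy t htt))
      (hmax htt) 2).trans hsup
  rcases hs.1.eq_or_lt with rfl | hs₀s
  · rw [sub_self, zero_pow hq, zero_mul, zero_pow two_ne_zero]
    positivity
  refine sq_pow_mul_le_of_pow_le hK (by positivity) (hy s hs) (hb s hs) (hyb s hs) ?_
  have hθ : 0 < s - s₀ := sub_pos.2 hs₀s
  have hθν : s - s₀ ≤ ν := by linarith [hs.2]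
  have hνpos : 0 < ν := hθ.trans_le hθν
  calc (s - s₀) ^ 2 * b s ≤ (s - s₀) * (ν * b s) := by nlinarith [mul_nonneg hθ.le (hb s hs)]
    _ ≤ (s - s₀) * (C / ν * y s - y' s) := by gcongr; linarith [hy' s hs]
    _ = (s - s₀) / ν * (C * y s) - (s - s₀) * y' s := by ring
    _ ≤ 1 * (C * y s) + q * y s := by
        have hratio : (s - s₀) / ν ≤ 1 := (div_le_one hνpos).2 hθν
        have := deriv_ge_of_isMaxOn_sub_pow_mul hs₀s (hderiv s hs)
          (hmax.on_subset (Icc_subset_Icc_right hs.2))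
        have := mul_le_mul_of_nonneg_right hratio (mul_nonneg hC (hy s hs))
        linarith
    _ = (C + q) * y s := by ring

section PeriodicFunctions

variable {v w : ℝ → ℝ}

lemma continuous_iteratedDeriv_of_smooth (hv : ContDiff ℝ (⊤ : ℕ∞) v) (k : ℕ) :
    Continuous (iteratedDeriv k v) :=
  hv.continuous_iteratedDeriv k (mod_cast le_top)

lemma hasDerivAt_iteratedDeriv (hv : ContDiff ℝ (⊤ : ℕ∞) v) (k : ℕ) (x : ℝ) :
    HasDerivAt (iteratedDeriv k v) (iteratedDeriv (k + 1) v x) x := by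
  rw [iteratedDeriv_succ]
  exact (hv.differentiable_iteratedDeriv k (mod_cast ENat.natCast_lt_top k) x).hasDerivAt

lemma periodic_iteratedDeriv {c : ℝ} (hv : Function.Periodic v c) (k : ℕ) :
    Function.Periodic (iteratedDeriv k v) c := fun x =>
  (congrFun (iteratedDeriv_comp_add_const k v c) x).symm.trans (by rw [hv.funext])

/-- The squared `L²` norm of the `k`-th derivative over the unit period, written as an interval
integral so that the calculus of interval integrals applies. -/
noncomputable def derivEnergy (v : ℝ → ℝ) (k : ℕ) : ℝ :=
  ∫ x in (0 : ℝ)..1, iteratedDeriv k v x ^ 2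

lemma derivEnergy_nonneg (v : ℝ → ℝ) (k : ℕ) : 0 ≤ derivEnergy v k :=
  intervalIntegral.integral_nonneg zero_le_one fun _ _ => sq_nonneg _

lemma sobLp_two_sq_eq_derivEnergy (hv : ContDiff ℝ (⊤ : ℕ∞) v) (k : ℕ) :
    sobLp k 2 v ^ 2 = derivEnergy v k := by
  have hmeas := (continuous_iteratedDeriv_of_smooth hv k).aestronglyMeasurable
    (μ := volume.restrict (Ioc (0 : ℝ) 1))
  have hnonneg : 0 ≤ ∫ x in Ioc (0 : ℝ) 1, iteratedDeriv k v x ^ 2 :=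
    integral_nonneg fun _ => sq_nonneg _
  rw [sobLp, derivEnergy, intervalIntegral.integral_of_le zero_le_one, toReal_eLpNorm hmeas,
    lpNorm_eq_integral_norm_rpow_toReal two_ne_zero ENNReal.ofNat_ne_top hmeas]
  simp [← Real.sqrt_eq_rpow, ← one_div, Real.sq_sqrt hnonneg]

lemma sq_derivEnergy_succ_le (hv : ContDiff ℝ (⊤ : ℕ∞) v) (hper : Function.Periodic v 1) (k : ℕ) :
    derivEnergy v (k + 1) ^ 2 ≤ derivEnergy v k * derivEnergy v (k + 2) :=
  sq_integral_sq_deriv_le zero_le_one (hasDerivAt_iteratedDeriv hv k)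
    (hasDerivAt_iteratedDeriv hv (k + 1)) (continuous_iteratedDeriv_of_smooth hv (k + 2))
    (by rw [(periodic_iteratedDeriv hper k).eq, (periodic_iteratedDeriv hper (k + 1)).eq])

lemma iteratedDeriv_succ_pow_four_le (hv : ContDiff ℝ (⊤ : ℕ∞) v)
    (hper : Function.Periodic v 1) (k : ℕ) {x : ℝ} (hx : x ∈ Icc (0 : ℝ) 1) :
    iteratedDeriv (k + 1) v x ^ 4 ≤ 4 * derivEnergy v (k + 1) * derivEnergy v (k + 2) := by
  obtain ⟨z, hz, hvz⟩ := exists_deriv_eq_zero zero_lt_one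
    (continuous_iteratedDeriv_of_smooth hv k).continuousOn (periodic_iteratedDeriv hper k).eq.symm
  exact pow_four_le_of_eq_zero (hasDerivAt_iteratedDeriv hv (k + 1))
    (continuous_iteratedDeriv_of_smooth hv (k + 2)) (Ioo_subset_Icc_self hz)
    (by rw [iteratedDeriv_succ, hvz]) hx

lemma abs_iteratedDeriv_succ_le_of_derivEnergy_le (hv : ContDiff ℝ (⊤ : ℕ∞) v)
    (hper : Function.Periodic v 1) {k : ℕ} {N : ℝ} (hN : 0 ≤ N)
    (hE₁ : derivEnergy v (k + 1) ≤ N ^ (2 * k + 1))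
    (hE₂ : derivEnergy v (k + 2) ≤ N ^ (2 * (k + 1) + 1)) {x : ℝ} (hx : x ∈ Icc (0 : ℝ) 1) :
    |iteratedDeriv (k + 1) v x| ≤ (2 * N) ^ (k + 1) := by
  refine le_of_pow_le_pow_left₀ four_ne_zero (by positivity) ?_
  calc |iteratedDeriv (k + 1) v x| ^ 4 = iteratedDeriv (k + 1) v x ^ 4 :=
        Even.pow_abs (by decide) _
    _ ≤ 4 * derivEnergy v (k + 1) * derivEnergy v (k + 2) :=
        iteratedDeriv_succ_pow_four_le hv hper k hx
    _ ≤ 4 * N ^ (2 * k + 1) * N ^ (2 * (k + 1) + 1) := by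
        have := derivEnergy_nonneg v (k + 2)
        gcongr
    _ = 4 * N ^ (4 * (k + 1)) := by ring
    _ ≤ 2 ^ (4 * (k + 1)) * N ^ (4 * (k + 1)) := by
        gcongr
        calc (4 : ℝ) ≤ 2 ^ 4 := by norm_num
          _ ≤ 2 ^ (4 * (k + 1)) := pow_le_pow_right₀ one_le_two (by omega)
    _ = ((2 * N) ^ (k + 1)) ^ 4 := by rw [← mul_pow, ← pow_mul, mul_comm (k + 1)]

lemma integral_dissipation_le (hv : ContDiff ℝ (⊤ : ℕ∞) v) (hvper : Function.Periodic v 1)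
    (hw : ContDiff ℝ (⊤ : ℕ∞) w) (hwper : Function.Periodic w 1) {ν : ℝ} (hν : 0 < ν) (k : ℕ) :
    ∫ x in (0 : ℝ)..1,
        2 * iteratedDeriv k v x * (ν * iteratedDeriv (k + 2) v x - iteratedDeriv (k + 1) w x)
      ≤ -(ν * derivEnergy v (k + 1)) + ν⁻¹ * derivEnergy w k := by
  have cv := continuous_iteratedDeriv_of_smooth hv
  have cw := continuous_iteratedDeriv_of_smooth hw
  have hparts : ∫ x in (0 : ℝ)..1,
        2 * iteratedDeriv k v x * (ν * iteratedDeriv (k + 2) v x - iteratedDeriv (k + 1) w x)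
      = -∫ x in (0 : ℝ)..1,
        2 * iteratedDeriv (k + 1) v x * (ν * iteratedDeriv (k + 1) v x - iteratedDeriv k w x) :=
    integral_mul_deriv_eq_neg_of_endpoints
      (fun x => (hasDerivAt_iteratedDeriv hv k x).const_mul 2)
      (fun x => ((hasDerivAt_iteratedDeriv hv (k + 1) x).const_mul ν).sub
        (hasDerivAt_iteratedDeriv hw k x))
      (by fun_prop) (by fun_prop)
      (by simp only [(periodic_iteratedDeriv hvper _).eq,
        (periodic_iteratedDeriv hwper _).eq])
  have hint (φ : ℝ → ℝ) (hφ : Continuous φ) : IntervalIntegrable φ volume 0 1 :=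
    hφ.intervalIntegrable _ _
  rw [hparts, derivEnergy, derivEnergy, ← intervalIntegral.integral_neg,
    ← intervalIntegral.integral_const_mul, ← intervalIntegral.integral_neg,
    ← intervalIntegral.integral_const_mul,
    ← intervalIntegral.integral_add (hint _ (by fun_prop)) (hint _ (by fun_prop))]
  refine intervalIntegral.integral_mono_on zero_le_one (hint _ (by fun_prop))
    (hint _ (by fun_prop)) fun x _ => ?_
  have hsq : 0 ≤ ν⁻¹ * (ν * iteratedDeriv (k + 1) v x - iteratedDeriv k w x) ^ 2 := by positivity
  have hexpand : ν⁻¹ * (ν * iteratedDeriv (k + 1) v x - iteratedDeriv k w x) ^ 2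
      = ν * iteratedDeriv (k + 1) v x ^ 2
        - 2 * (iteratedDeriv (k + 1) v x * iteratedDeriv k w x)
        + ν⁻¹ * iteratedDeriv k w x ^ 2 := by
    field_simp
    ring
  linarith

end PeriodicFunctions

/-- A smooth `1`-periodic function of mean zero whose slope is bounded above (but not below) by
`B`: the class to which Oleinik's estimate confines the solution at each time. -/
structure IsOneSidedProfile (B : ℝ) (v : ℝ → ℝ) : Prop where
  contDiff : ContDiff ℝ (⊤ : ℕ∞) v
  periodic : Function.Periodic v 1
  integral_eq_zero : ∫ x in (0 : ℝ)..1, v x = 0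
  deriv_le : ∀ x, deriv v x ≤ B

namespace IsOneSidedProfile

variable {B : ℝ} {v : ℝ → ℝ}

lemma continuous_deriv (h : IsOneSidedProfile B v) : Continuous (deriv v) :=
  h.contDiff.continuous_deriv (by simp)

lemma hasDerivAt (h : IsOneSidedProfile B v) (x : ℝ) : HasDerivAt v (deriv v x) x :=
  (h.contDiff.differentiable (by simp) x).hasDerivAt

lemma bound_nonneg (h : IsOneSidedProfile B v) : 0 ≤ B := by
  obtain ⟨z, -, hz⟩ := exists_deriv_eq_zero zero_lt_one h.contDiff.continuous.continuousOn
    h.periodic.eq.symm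
  exact hz ▸ h.deriv_le z

-- The mean of `v'` vanishes, so its negative part is controlled by its positive part.
lemma integral_abs_deriv_le (h : IsOneSidedProfile B v) :
    ∫ x in (0 : ℝ)..1, |deriv v x| ≤ 2 * B := by
  have hint := h.continuous_deriv.intervalIntegrable (μ := volume) 0 1
  have hmean : ∫ x in (0 : ℝ)..1, deriv v x = 0 := by
    rw [intervalIntegral.integral_eq_sub_of_hasDerivAt (fun x _ => h.hasDerivAt x) hint,
      h.periodic.eq, sub_self]
  calc ∫ x in (0 : ℝ)..1, |deriv v x| ≤ ∫ x in (0 : ℝ)..1, (2 * B - deriv v x) := by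
        refine intervalIntegral.integral_mono_on zero_le_one hint.abs
          (intervalIntegrable_const.sub hint) fun x _ => abs_le.2 ⟨?_, ?_⟩ <;>
          linarith [h.deriv_le x, h.bound_nonneg]
    _ = 2 * B := by
        rw [intervalIntegral.integral_sub intervalIntegrable_const hint, hmean]
        simp

lemma abs_le (h : IsOneSidedProfile B v) {x : ℝ} (hx : x ∈ Icc (0 : ℝ) 1) : |v x| ≤ 2 * B := by
  obtain ⟨z, hz, hvz⟩ := exists_eq_interval_average zero_ne_one h.contDiff.continuous.continuousOn
  rw [interval_average_eq, h.integral_eq_zero, smul_zero] at hvz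
  exact (abs_le_integral_abs_deriv_of_eq_zero h.hasDerivAt h.continuous_deriv
    (uIcc_of_le (zero_le_one (α := ℝ)) ▸ uIoo_subset_uIcc_self hz) hvz hx).trans
      h.integral_abs_deriv_le

lemma derivEnergy_one_pow_three_le (h : IsOneSidedProfile B v) :
    derivEnergy v 1 ^ 3 ≤ 64 * B ^ 4 * derivEnergy v 2 := by
  obtain ⟨z, hz, hmax⟩ := isCompact_Icc.exists_isMaxOn (nonempty_Icc.2 (zero_le_one (α := ℝ)))
    h.continuous_deriv.abs.continuousOn
  have hE₁ : derivEnergy v 1 ≤ 2 * B * |deriv v z| :=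
    calc derivEnergy v 1 ≤ ∫ x in (0 : ℝ)..1, |deriv v x| * |deriv v z| := by
          rw [derivEnergy, iteratedDeriv_one]
          have := h.continuous_deriv
          refine intervalIntegral.integral_mono_on zero_le_one
            (Continuous.intervalIntegrable (by fun_prop) _ _)
            (Continuous.intervalIntegrable (by fun_prop) _ _) fun x hx => ?_
          rw [← sq_abs, sq]
          exact mul_le_mul_of_nonneg_left (hmax hx) (abs_nonneg _)
      _ ≤ 2 * B * |deriv v z| := by
          rw [intervalIntegral.integral_mul_const]
          exact mul_le_mul_of_nonneg_right h.integral_abs_deriv_le (abs_nonneg _)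
  have hsup : |deriv v z| ^ 4 ≤ 4 * derivEnergy v 1 * derivEnergy v 2 := by
    simpa [Even.pow_abs (by decide : Even 4)] using
      iteratedDeriv_succ_pow_four_le h.contDiff h.periodic 0 hz
  rcases (derivEnergy_nonneg v 1).eq_or_lt with hzero | hpos
  · have := derivEnergy_nonneg v 2
    rw [← hzero, zero_pow three_ne_zero]
    positivity
  refine le_of_mul_le_mul_left ?_ hpos
  have := h.bound_nonneg
  calc derivEnergy v 1 * derivEnergy v 1 ^ 3 = derivEnergy v 1 ^ 4 := by ring
    _ ≤ (2 * B * |deriv v z|) ^ 4 := by gcongr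
    _ = 16 * B ^ 4 * |deriv v z| ^ 4 := by ring
    _ ≤ 16 * B ^ 4 * (4 * derivEnergy v 1 * derivEnergy v 2) := by gcongr
    _ = derivEnergy v 1 * (64 * B ^ 4 * derivEnergy v 2) := by ring

lemma derivEnergy_pow_le (h : IsOneSidedProfile B v) (k : ℕ) :
    derivEnergy v (k + 1) ^ (2 * k + 3) ≤ 64 * B ^ 4 * derivEnergy v (k + 2) ^ (2 * k + 1) := by
  induction k with
  | zero => simpa using h.derivEnergy_one_pow_three_le
  | succ k ih =>
    set e₁ := derivEnergy v (k + 1)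
    set e₂ := derivEnergy v (k + 2)
    set e₃ := derivEnergy v (k + 3)
    have he₂ : 0 ≤ e₂ := derivEnergy_nonneg v _
    have he₃ : 0 ≤ e₃ := derivEnergy_nonneg v _
    change e₂ ^ (2 * k + 5) ≤ 64 * B ^ 4 * e₃ ^ (2 * k + 3)
    rcases he₂.eq_or_lt with hzero | hpos
    · rw [← hzero, zero_pow (Nat.succ_ne_zero _)]
      positivity
    refine le_of_mul_le_mul_left ?_ (pow_pos hpos (2 * k + 1))
    calc e₂ ^ (2 * k + 1) * e₂ ^ (2 * k + 5) = (e₂ ^ 2) ^ (2 * k + 3) := by ring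
      _ ≤ (e₁ * e₃) ^ (2 * k + 3) := by
          gcongr
          exact sq_derivEnergy_succ_le h.contDiff h.periodic (k + 1)
      _ = e₁ ^ (2 * k + 3) * e₃ ^ (2 * k + 3) := mul_pow _ _ _
      _ ≤ 64 * B ^ 4 * e₂ ^ (2 * k + 1) * e₃ ^ (2 * k + 3) := by gcongr
      _ = e₂ ^ (2 * k + 1) * (64 * B ^ 4 * e₃ ^ (2 * k + 3)) := by ring

end IsOneSidedProfile

lemma le_mul_pow_of_pow_le {e : ℕ → ℝ} {K : ℝ} (hK : 1 ≤ K)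
    (he : ∀ j, e j ^ (2 * j + 3) ≤ K * e (j + 1) ^ (2 * j + 1)) (hnonneg : ∀ j, 0 ≤ e j)
    {N : ℝ} (hN : 0 ≤ N) {j M : ℕ} (hj : j ≤ M) (heM : e M ≤ N ^ (2 * M + 1)) :
    e j ≤ (K ^ (M - j) * N) ^ (2 * j + 1) := by
  induction hj using Nat.decreasingInduction with
  | self => simpa using heM
  | of_succ j hj ih =>
    have : 0 ≤ K ^ (M - (j + 1)) * N := by positivity
    refine le_of_pow_le_pow_left₀ (Nat.succ_ne_zero (2 * j + 2)) (by positivity) ?_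
    calc e j ^ (2 * j + 3) ≤ K * e (j + 1) ^ (2 * j + 1) := he j
      _ ≤ K ^ ((2 * j + 1) * (2 * j + 3))
          * ((K ^ (M - (j + 1)) * N) ^ (2 * (j + 1) + 1)) ^ (2 * j + 1) := by
          have := hnonneg (j + 1)
          gcongr
          exact le_self_pow₀ hK (Nat.mul_ne_zero (by omega) (by omega))
      _ = ((K ^ (M - j) * N) ^ (2 * j + 1)) ^ (2 * j + 3) := by
          rw [show M - j = M - (j + 1) + 1 by omega]
          ring

lemma IsOneSidedProfile.exists_length_scale (B : ℝ) (M : ℕ) :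
    ∃ κ, 0 ≤ κ ∧ ∀ v, IsOneSidedProfile B v → ∃ R, 0 ≤ R ∧
      R ^ (2 * M + 1) ≤ κ * derivEnergy v (M + 1) ∧
      (∀ j ≤ M, derivEnergy v (j + 1) ≤ R ^ (2 * j + 1)) ∧
      ∀ i, 1 ≤ i → i ≤ M → ∀ x ∈ Icc (0 : ℝ) 1, |iteratedDeriv i v x| ≤ R ^ i := by
  set K := max 1 (64 * B ^ 4)
  have hK : 1 ≤ K := le_max_left _ _
  refine ⟨(2 * K ^ M) ^ (2 * M + 1), by positivity, fun v h => ?_⟩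
  obtain ⟨N, hN, hNE⟩ : ∃ N, 0 ≤ N ∧ N ^ (2 * M + 1) = derivEnergy v (M + 1) :=
    ⟨derivEnergy v (M + 1) ^ ((2 * M + 1 : ℕ) : ℝ)⁻¹, Real.rpow_nonneg (derivEnergy_nonneg _ _) _,
      Real.rpow_inv_natCast_pow (derivEnergy_nonneg _ _) (Nat.succ_ne_zero _)⟩
  have hinterp (j : ℕ) : derivEnergy v (j + 1) ^ (2 * j + 3)
      ≤ K * derivEnergy v (j + 1 + 1) ^ (2 * j + 1) :=
    (h.derivEnergy_pow_le j).trans <| mul_le_mul_of_nonneg_right (le_max_right _ _)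
      (pow_nonneg (derivEnergy_nonneg _ _) _)
  have hE (j : ℕ) (hj : j ≤ M) : derivEnergy v (j + 1) ≤ (K ^ M * N) ^ (2 * j + 1) :=
    (le_mul_pow_of_pow_le (e := fun j => derivEnergy v (j + 1)) hK hinterp
      (fun _ => derivEnergy_nonneg _ _) hN hj hNE.ge).trans <| by
        gcongr
        exact Nat.sub_le M j
  have hKN : 0 ≤ K ^ M * N := by positivity
  refine ⟨2 * (K ^ M * N), by positivity, ?_, fun j hj => (hE j hj).trans ?_, ?_⟩
  · rw [← hNE, ← mul_pow, mul_assoc]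
  · exact pow_le_pow_left₀ hKN (by linarith) _
  · rintro (_ | i) hi hiM x hx
    · omega
    exact abs_iteratedDeriv_succ_le_of_derivEnergy_le h.contDiff h.periodic hKN
      (hE i (by omega)) (hE (i + 1) hiM) hx

lemma exists_abs_iteratedDeriv_comp_le {g : ℝ → ℝ} (hg : ContDiff ℝ (⊤ : ℕ∞) g) (A : ℝ) (n : ℕ) :
    ∃ C, 0 ≤ C ∧ ∀ k ≤ n, ∀ (v : ℝ → ℝ), ContDiff ℝ (⊤ : ℕ∞) v → ∀ x R : ℝ, 0 ≤ R → |v x| ≤ A →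
      (∀ i, 1 ≤ i → i ≤ k → |iteratedDeriv i v x| ≤ R ^ i) →
        |iteratedDeriv k (g ∘ v) x| ≤ C * R ^ k := by
  choose c hc using fun i => isCompact_Icc.exists_bound_of_continuousOn (s := Icc (-A) A)
    (continuous_iteratedDeriv_of_smooth hg i).continuousOn
  set G := ∑ i ∈ Finset.range (n + 1), |c i|
  have : 0 ≤ G := Finset.sum_nonneg fun _ _ => abs_nonneg _
  refine ⟨n.factorial * G, by positivity, fun k hk v hv x R hR hx hvR => ?_⟩
  have hgG (i : ℕ) (hi : i ≤ k) : ‖iteratedFDeriv ℝ i g (v x)‖ ≤ G := by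
    rw [norm_iteratedFDeriv_eq_norm_iteratedDeriv]
    calc _ ≤ c i := hc i (v x) (abs_le.1 hx)
      _ ≤ |c i| := le_abs_self _
      _ ≤ G := Finset.single_le_sum (f := fun i => |c i|) (fun _ _ => abs_nonneg _)
          (Finset.mem_range.2 (by omega))
  have hcomp := norm_iteratedFDeriv_comp_le hg hv (mod_cast le_top) x hgG
    fun i hi hik => by simpa [norm_iteratedFDeriv_eq_norm_iteratedDeriv] using hvR i hi hik
  rw [norm_iteratedFDeriv_eq_norm_iteratedDeriv, Real.norm_eq_abs] at hcomp
  refine hcomp.trans ?_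
  gcongr

lemma iteratedDeriv_succ_comp {f v : ℝ → ℝ} (hf : ContDiff ℝ (⊤ : ℕ∞) f)
    (hv : ContDiff ℝ (⊤ : ℕ∞) v) (n : ℕ) (x : ℝ) :
    iteratedDeriv (n + 1) (f ∘ v) x = ∑ i ∈ Finset.range (n + 1),
      n.choose i * iteratedDeriv i (deriv f ∘ v) x * iteratedDeriv (n - i + 1) v x := by
  have hderiv : deriv (f ∘ v) = (deriv f ∘ v) * deriv v := funext fun y =>
    deriv_comp y (hf.differentiable (by simp) _) (hv.differentiable (by simp) y)
  have hf' : ContDiff ℝ (⊤ : ℕ∞) (deriv f) := hf.deriv'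
  have hv' : ContDiff ℝ (⊤ : ℕ∞) (deriv v) := hv.deriv'
  rw [iteratedDeriv_succ', hderiv, iteratedDeriv_mul
    ((hf'.comp hv).of_le (mod_cast le_top)).contDiffAt (hv'.of_le (mod_cast le_top)).contDiffAt]
  simp only [iteratedDeriv_succ']

lemma exists_sq_iteratedDeriv_succ_comp_le {f : ℝ → ℝ} (hf : ContDiff ℝ (⊤ : ℕ∞) f) (A : ℝ)
    (n : ℕ) :
    ∃ C, 0 ≤ C ∧ ∀ (v : ℝ → ℝ), ContDiff ℝ (⊤ : ℕ∞) v → ∀ x R : ℝ, 0 ≤ R → |v x| ≤ A →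
      (∀ i, 1 ≤ i → i ≤ n → |iteratedDeriv i v x| ≤ R ^ i) →
        iteratedDeriv (n + 1) (f ∘ v) x ^ 2 ≤
          C * ∑ i ∈ Finset.range (n + 1), R ^ (2 * i) * iteratedDeriv (n - i + 1) v x ^ 2 := by
  obtain ⟨C, hC, hcomp⟩ := exists_abs_iteratedDeriv_comp_le hf.deriv' A n
  refine ⟨(n + 1) * (2 ^ n * C) ^ 2, by positivity, fun v hv x R hR hx hvR => ?_⟩
  rw [iteratedDeriv_succ_comp hf hv, mul_assoc, Finset.mul_sum]
  refine sq_sum_le_card_mul_sum_sq.trans ?_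
  rw [Finset.card_range, Nat.cast_add_one]
  gcongr with i hi
  have hin : i ≤ n := Nat.lt_succ_iff.1 (Finset.mem_range.1 hi)
  have hfactor : |n.choose i * iteratedDeriv i (deriv f ∘ v) x| ≤ 2 ^ n * C * R ^ i := by
    rw [abs_mul, Nat.abs_cast, mul_assoc]
    gcongr
    · exact_mod_cast Nat.choose_le_two_pow n i
    · exact hcomp i hin v hv x R hR hx fun j hj hji => hvR j hj (hji.trans hin)
  calc (n.choose i * iteratedDeriv i (deriv f ∘ v) x * iteratedDeriv (n - i + 1) v x) ^ 2
      = |n.choose i * iteratedDeriv i (deriv f ∘ v) x| ^ 2 * iteratedDeriv (n - i + 1) v x ^ 2 := by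
        rw [sq_abs, mul_pow]
    _ ≤ (2 ^ n * C * R ^ i) ^ 2 * iteratedDeriv (n - i + 1) v x ^ 2 := by gcongr
    _ = (2 ^ n * C) ^ 2 * (R ^ (2 * i) * iteratedDeriv (n - i + 1) v x ^ 2) := by ring

lemma IsOneSidedProfile.exists_derivEnergy_comp_le {f : ℝ → ℝ} (hf : ContDiff ℝ (⊤ : ℕ∞) f)
    (B : ℝ) (M : ℕ) :
    ∃ C, 0 ≤ C ∧ ∀ v, IsOneSidedProfile B v →
      derivEnergy (f ∘ v) (M + 1) ≤ C * derivEnergy v (M + 1) := by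
  obtain ⟨κ, hκ, hscale⟩ := exists_length_scale B M
  obtain ⟨C, hC, hcomp⟩ := exists_sq_iteratedDeriv_succ_comp_le hf (2 * B) M
  refine ⟨C * ((M + 1) * κ), by positivity, fun v h => ?_⟩
  obtain ⟨R, hR, hRE, hE, hsup⟩ := hscale v h
  have cv := continuous_iteratedDeriv_of_smooth h.contDiff
  have cfv := continuous_iteratedDeriv_of_smooth (hf.comp h.contDiff)
  calc derivEnergy (f ∘ v) (M + 1)
      ≤ ∫ x in (0 : ℝ)..1,
          C * ∑ i ∈ Finset.range (M + 1), R ^ (2 * i) * iteratedDeriv (M - i + 1) v x ^ 2 :=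
        intervalIntegral.integral_mono_on zero_le_one
          (Continuous.intervalIntegrable (by fun_prop) _ _)
          (Continuous.intervalIntegrable (by fun_prop) _ _) fun x hx =>
            hcomp v h.contDiff x R hR (h.abs_le hx) fun i hi hiM => hsup i hi hiM x hx
    _ = C * ∑ i ∈ Finset.range (M + 1), R ^ (2 * i) * derivEnergy v (M - i + 1) := by
        rw [intervalIntegral.integral_const_mul, intervalIntegral.integral_finsetSum
          fun _ _ => Continuous.intervalIntegrable (by fun_prop) _ _]
        simp only [intervalIntegral.integral_const_mul, derivEnergy]
    _ ≤ C * ∑ i ∈ Finset.range (M + 1), R ^ (2 * M + 1) := by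
        gcongr with i hi
        have hiM : i ≤ M := Nat.lt_succ_iff.1 (Finset.mem_range.1 hi)
        calc R ^ (2 * i) * derivEnergy v (M - i + 1) ≤ R ^ (2 * i) * R ^ (2 * (M - i) + 1) := by
              gcongr
              exact hE _ (Nat.sub_le M i)
          _ = R ^ (2 * M + 1) := by
              rw [← pow_add]
              congr 1
              omega
    _ ≤ C * ((M + 1) * (κ * derivEnergy v (M + 1))) := by
        rw [Finset.sum_const, Finset.card_range, nsmul_eq_mul, Nat.cast_add_one]
        gcongr
    _ = C * ((M + 1) * κ) * derivEnergy v (M + 1) := by ring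

lemma IsOneSidedProfile.exists_integral_dissipation_le {f : ℝ → ℝ} (hf : ContDiff ℝ (⊤ : ℕ∞) f)
    (B : ℝ) (M : ℕ) :
    ∃ C, 0 ≤ C ∧ ∀ v, IsOneSidedProfile B v → ∀ ν, 0 < ν →
      ∫ x in (0 : ℝ)..1, 2 * iteratedDeriv (M + 1) v x *
          (ν * iteratedDeriv (M + 3) v x - iteratedDeriv (M + 2) (f ∘ v) x)
        ≤ -(ν * derivEnergy v (M + 2)) + C / ν * derivEnergy v (M + 1) := by
  obtain ⟨C, hC, hcomp⟩ := exists_derivEnergy_comp_le hf B M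
  refine ⟨C, hC, fun v h ν hν => ?_⟩
  calc _ ≤ -(ν * derivEnergy v (M + 2)) + ν⁻¹ * derivEnergy (f ∘ v) (M + 1) :=
        integral_dissipation_le h.contDiff h.periodic (hf.comp h.contDiff) (h.periodic.comp f) hν
          (M + 1)
    _ ≤ -(ν * derivEnergy v (M + 2)) + ν⁻¹ * (C * derivEnergy v (M + 1)) := by
        gcongr
        exact hcomp v h
    _ = -(ν * derivEnergy v (M + 2)) + C / ν * derivEnergy v (M + 1) := by ring

section SmoothFamilies

variable {F : Type*} [NormedAddCommGroup F] [NormedSpace ℝ F] {J : Set ℝ} {w : ℝ → ℝ → F} {t : ℝ}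

lemma contDiff_slice (hw : ContDiffOn ℝ (⊤ : ℕ∞) (Function.uncurry w) (J ×ˢ univ)) (ht : t ∈ J) :
    ContDiff ℝ (⊤ : ℕ∞) (w t) :=
  hw.comp_contDiff (contDiff_const.prodMk contDiff_id) fun _ => ⟨ht, trivial⟩

lemma contDiffOn_deriv_slice (hJ : UniqueDiffOn ℝ J)
    (hw : ContDiffOn ℝ (⊤ : ℕ∞) (Function.uncurry w) (J ×ˢ univ)) :
    ContDiffOn ℝ (⊤ : ℕ∞) (Function.uncurry fun t => deriv (w t)) (J ×ˢ univ) := by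
  refine ((hw.fderivWithin (hJ.prod uniqueDiffOn_univ) le_rfl).clm_apply
    (contDiffOn_const (c := ((0 : ℝ), (1 : ℝ))))).congr fun ⟨t, x⟩ ⟨ht, _⟩ => ?_
  have hslice : HasDerivAt (fun y : ℝ => (t, y)) ((0 : ℝ), (1 : ℝ)) x :=
    (hasDerivAt_const x t).prodMk (hasDerivAt_id x)
  have hfderiv := (hw.differentiableOn (by simp) (t, x) ⟨ht, trivial⟩).hasFDerivWithinAt
  exact (hasDerivWithinAt_univ.1 (hfderiv.comp_hasDerivWithinAt x hslice.hasDerivWithinAt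
    fun _ _ => ⟨ht, trivial⟩)).deriv

lemma contDiffOn_iteratedDeriv_slice (hJ : UniqueDiffOn ℝ J)
    (hw : ContDiffOn ℝ (⊤ : ℕ∞) (Function.uncurry w) (J ×ˢ univ)) (k : ℕ) :
    ContDiffOn ℝ (⊤ : ℕ∞) (Function.uncurry fun t => iteratedDeriv k (w t)) (J ×ˢ univ) := by
  induction k with
  | zero => simpa only [iteratedDeriv_zero] using hw
  | succ k ih => simpa only [iteratedDeriv_succ] using contDiffOn_deriv_slice hJ ih

lemma hasDerivAt_fst_of_hasFDerivAt {G : ℝ × ℝ → F} {G' : ℝ × ℝ →L[ℝ] F} {x : ℝ}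
    (hG : HasFDerivAt G G' (t, x)) : HasDerivAt (fun s => G (s, x)) (G' (1, 0)) t :=
  have hpath : HasDerivAt (fun s : ℝ => (s, x)) ((1 : ℝ), (0 : ℝ)) t :=
    (hasDerivAt_id t).prodMk (hasDerivAt_const t x)
  hG.comp_hasDerivAt t hpath

lemma hasDerivAt_snd_of_hasFDerivAt {G : ℝ × ℝ → F} {G' : ℝ × ℝ →L[ℝ] F} {x : ℝ}
    (hG : HasFDerivAt G G' (t, x)) : HasDerivAt (fun y => G (t, y)) (G' (0, 1)) x :=
  have hpath : HasDerivAt (fun y : ℝ => (t, y)) ((0 : ℝ), (1 : ℝ)) x :=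
    (hasDerivAt_const x t).prodMk (hasDerivAt_id x)
  hG.comp_hasDerivAt x hpath

lemma hasFDerivAt_uncurry (hJ : IsOpen J)
    (hw : ContDiffOn ℝ (⊤ : ℕ∞) (Function.uncurry w) (J ×ˢ univ)) (ht : t ∈ J) (x : ℝ) :
    HasFDerivAt (Function.uncurry w) (fderiv ℝ (Function.uncurry w) (t, x)) (t, x) :=
  ((hw.contDiffAt ((hJ.prod isOpen_univ).mem_nhds ⟨ht, trivial⟩)).differentiableAt
    (by simp)).hasFDerivAt

lemma hasDerivAt_time (hJ : IsOpen J)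
    (hw : ContDiffOn ℝ (⊤ : ℕ∞) (Function.uncurry w) (J ×ˢ univ)) (ht : t ∈ J) (x : ℝ) :
    HasDerivAt (fun s => w s x) (fderiv ℝ (Function.uncurry w) (t, x) (1, 0)) t :=
  hasDerivAt_fst_of_hasFDerivAt (hasFDerivAt_uncurry hJ hw ht x)

lemma hasDerivAt_space (hJ : IsOpen J)
    (hw : ContDiffOn ℝ (⊤ : ℕ∞) (Function.uncurry w) (J ×ˢ univ)) (ht : t ∈ J) (x : ℝ) :
    HasDerivAt (w t) (fderiv ℝ (Function.uncurry w) (t, x) (0, 1)) x :=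
  hasDerivAt_snd_of_hasFDerivAt (hasFDerivAt_uncurry hJ hw ht x)

lemma contDiffOn_deriv_time (hJ : IsOpen J)
    (hw : ContDiffOn ℝ (⊤ : ℕ∞) (Function.uncurry w) (J ×ˢ univ)) :
    ContDiffOn ℝ (⊤ : ℕ∞) (Function.uncurry fun t x => deriv (fun s => w s x) t) (J ×ˢ univ) :=
  ((hw.fderiv_of_isOpen (hJ.prod isOpen_univ) le_rfl).clm_apply
    (contDiffOn_const (c := ((1 : ℝ), (0 : ℝ))))).congr
      fun ⟨_, x⟩ ⟨ht, _⟩ => (hasDerivAt_time hJ hw ht x).deriv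

lemma hasDerivAt_deriv_slice (hJ : IsOpen J)
    (hw : ContDiffOn ℝ (⊤ : ℕ∞) (Function.uncurry w) (J ×ˢ univ)) (ht : t ∈ J) (x : ℝ) :
    HasDerivAt (fun s => deriv (w s) x) (deriv (fun y => deriv (fun s => w s y) t) x) t := by
  have hmem : J ×ˢ univ ∈ nhds (t, x) := (hJ.prod isOpen_univ).mem_nhds ⟨ht, trivial⟩
  have hsymm : IsSymmSndFDerivAt ℝ (Function.uncurry w) (t, x) :=
    (hw.contDiffAt hmem).isSymmSndFDerivAt <| by
      rw [minSmoothness_of_isRCLikeNormedField]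
      exact WithTop.coe_le_coe.mpr le_top
  have hsnd : HasFDerivAt (fderiv ℝ (Function.uncurry w))
      (fderiv ℝ (fderiv ℝ (Function.uncurry w)) (t, x)) (t, x) :=
    (((hw.fderiv_of_isOpen (m := (⊤ : ℕ∞)) (hJ.prod isOpen_univ) le_rfl).contDiffAt
      hmem).differentiableAt (by simp)).hasFDerivAt
  have happly (e : ℝ × ℝ) : HasFDerivAt (fun q => fderiv ℝ (Function.uncurry w) q e)
      ((fderiv ℝ (fderiv ℝ (Function.uncurry w)) (t, x)).flip e) (t, x) :=
    ((ContinuousLinearMap.apply ℝ F e).hasFDerivAt).comp (t, x) hsnd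
  have htime : (fun y => deriv (fun s => w s y) t)
      = fun y => fderiv ℝ (Function.uncurry w) (t, y) (1, 0) :=
    funext fun y => (hasDerivAt_time hJ hw ht y).deriv
  have hspace : (fun s => deriv (w s) x)
      =ᶠ[nhds t] fun s => fderiv ℝ (Function.uncurry w) (s, x) (0, 1) := by
    filter_upwards [hJ.mem_nhds ht] with s hs using (hasDerivAt_space hJ hw hs x).deriv
  rw [htime, (hasDerivAt_snd_of_hasFDerivAt (happly (1, 0))).deriv, ContinuousLinearMap.flip_apply,
    hsymm.eq]
  exact (hasDerivAt_fst_of_hasFDerivAt (happly (0, 1))).congr_of_eventuallyEq hspace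

lemma hasDerivAt_iteratedDeriv_slice (hJ : IsOpen J)
    (hw : ContDiffOn ℝ (⊤ : ℕ∞) (Function.uncurry w) (J ×ˢ univ)) (ht : t ∈ J) (k : ℕ) (x : ℝ) :
    HasDerivAt (fun s => iteratedDeriv k (w s) x)
      (iteratedDeriv k (fun y => deriv (fun s => w s y) t) x) t := by
  induction k generalizing w with
  | zero => simpa only [iteratedDeriv_zero] using
      (hasDerivAt_time hJ hw ht x).differentiableAt.hasDerivAt
  | succ k ih =>
    have h := ih (contDiffOn_deriv_slice hJ.uniqueDiffOn hw)
    simpa only [iteratedDeriv_succ', (hasDerivAt_deriv_slice hJ hw ht _).deriv] using h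

lemma hasDerivAt_integral_slice (hJ : IsOpen J)
    (hw : ContDiffOn ℝ (⊤ : ℕ∞) (Function.uncurry w) (J ×ˢ univ)) (ht : t ∈ J) (a b : ℝ) :
    HasDerivAt (fun s => ∫ x in a..b, w s x) (∫ x in a..b, deriv (fun s => w s x) t) t := by
  obtain ⟨ε, hε, hball⟩ := Metric.nhds_basis_closedBall.mem_iff.1 (hJ.mem_nhds ht)
  have hw' := contDiffOn_deriv_time hJ hw
  obtain ⟨C, hC⟩ := ((isCompact_closedBall t ε).prod isCompact_uIcc).exists_bound_of_continuousOn
    (hw'.continuousOn.mono (prod_mono hball (subset_univ (uIcc a b))))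
  refine (intervalIntegral.hasDerivAt_integral_of_dominated_loc_of_deriv_le
    (F' := fun s x => deriv (fun r => w r x) s) (bound := fun _ => C)
    (Metric.closedBall_mem_nhds t hε) ?_ ((contDiff_slice hw ht).continuous.intervalIntegrable _ _)
    (contDiff_slice hw' ht).continuous.aestronglyMeasurable ?_ intervalIntegrable_const ?_).2
  · filter_upwards [hJ.mem_nhds ht] with s hs
    exact (contDiff_slice hw hs).continuous.aestronglyMeasurable
  · exact .of_forall fun x hx s hs => hC (s, x) ⟨hs, uIoc_subset_uIcc hx⟩
  · exact .of_forall fun x _ s hs =>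
      (hasDerivAt_time hJ hw (hball hs) x).differentiableAt.hasDerivAt

end SmoothFamilies

lemma norm_le_toReal_eLpNorm_top {E : Type*} [NormedAddCommGroup E] {g : ℝ → E} {a b x : ℝ}
    (hg : Continuous g) (hx : x ∈ Ioc a b) :
    ‖g x‖ ≤ (eLpNorm g ⊤ (volume.restrict (Ioc a b))).toReal := by
  set N := (eLpNorm g ⊤ (volume.restrict (Ioc a b))).toReal
  obtain ⟨C, hC⟩ := isCompact_Icc.exists_bound_of_continuousOn (s := Icc a b) hg.continuousOn
  have hmem : MemLp g ⊤ (volume.restrict (Ioc a b)) :=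
    memLp_top_of_bound hg.aestronglyMeasurable C <|
      (ae_restrict_iff' measurableSet_Ioc).2 (.of_forall fun y hy => hC y (Ioc_subset_Icc_self hy))
  have hae : ∀ᵐ y ∂volume.restrict (Ioc a b), max ‖g y‖ N = N := by
    filter_upwards [enorm_ae_le_eLpNormEssSup g (volume.restrict (Ioc a b))] with y hy
    rw [← eLpNorm_exponent_top] at hy
    exact max_eq_right (toReal_enorm (g y) ▸ ENNReal.toReal_mono hmem.2.ne hy)
  exact max_eq_right_iff.1 <| Measure.eqOn_Ioc_of_ae_eq volume hae
    (hg.norm.max continuous_const).continuousOn continuousOn_const hx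

lemma deriv_le_sobLp_one_top {v : ℝ → ℝ} (hv : ContDiff ℝ (⊤ : ℕ∞) v) (hper : Function.Periodic v 1)
    (x : ℝ) : deriv v x ≤ sobLp 1 ⊤ v := by
  obtain ⟨y, hy, hxy⟩ := (periodic_iteratedDeriv hper 1).exists_mem_Ioc zero_lt_one x 0
  rw [zero_add] at hy
  rw [← iteratedDeriv_one, hxy]
  exact (le_abs_self _).trans
    (norm_le_toReal_eLpNorm_top (continuous_iteratedDeriv_of_smooth hv 1) hy)

lemma iteratedDeriv_two_comp_nonneg {f v : ℝ → ℝ} (hf : ContDiff ℝ (⊤ : ℕ∞) f)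
    (hconv : ConvexOn ℝ univ f) (hv : ContDiff ℝ (⊤ : ℕ∞) v) {x : ℝ}
    (hx : deriv (deriv v) x = 0) : 0 ≤ iteratedDeriv 2 (f ∘ v) x := by
  have hmono : Monotone (deriv f) := monotoneOn_univ.1 <|
    hconv.monotoneOn_deriv fun y _ => hf.differentiable (by simp) y
  have hchain : iteratedDeriv 2 (f ∘ v) x = deriv (deriv f) (v x) * deriv v x ^ 2 := by
    have hf' : ContDiff ℝ (⊤ : ℕ∞) (deriv f) := hf.deriv'
    have hcomp := deriv_comp x (hf'.differentiable (by simp) (v x))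
      (hv.differentiable (by simp) x)
    simp [iteratedDeriv_succ_comp hf hv 1 x, Finset.sum_range_succ, iteratedDeriv_succ, hx, hcomp,
      sq, mul_assoc]
  rw [hchain]
  exact mul_nonneg hmono.deriv_nonneg (sq_nonneg _)

/-- Smooth `1`-periodic solutions of the viscous conservation law `u_t + f'(u) u_x = ν u_xx` with
mean zero, for an arbitrary flux `f` and viscosity `ν`. As in `IsBurgersSolution`, smoothness
holds up to the initial time `0`. -/
structure IsZeroMeanSolution (f : ℝ → ℝ) (ν : ℝ) (u : ℝ → ℝ → ℝ) : Prop where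
  contDiffOn : ContDiffOn ℝ (⊤ : ℕ∞) (Function.uncurry u) (Ici 0 ×ˢ univ)
  periodic : ∀ t, 0 ≤ t → Function.Periodic (u t) 1
  deriv_time_add : ∀ t, 0 < t → ∀ x,
    deriv (fun s => u s x) t + deriv f (u t x) * deriv (u t) x - ν * deriv (deriv (u t)) x = 0
  integral_eq_zero : ∀ t, 0 ≤ t → ∫ x in (0 : ℝ)..1, u t x = 0

lemma IsBurgersSolution.isZeroMeanSolution {f : ℝ → ℝ} {σ ν : ℝ} {u : ℝ → ℝ → ℝ}
    (h : IsBurgersSolution f σ ν u) : IsZeroMeanSolution f ν u where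
  contDiffOn := h.hu
  periodic t _ := h.hper t
  deriv_time_add := h.hpde
  integral_eq_zero t ht := by
    rw [intervalIntegral.integral_of_le zero_le_one]
    exact h.hmean t ht

lemma IsBurgersSolution.convexOn {f : ℝ → ℝ} {σ ν : ℝ} {u : ℝ → ℝ → ℝ}
    (h : IsBurgersSolution f σ ν u) : ConvexOn ℝ univ f :=
  have hf' : ContDiff ℝ (⊤ : ℕ∞) (deriv f) := h.hf.deriv'
  convexOn_univ_of_deriv2_nonneg (h.hf.differentiable (by simp))
    (hf'.differentiable (by simp)) fun y => by
      rw [← iteratedDeriv_eq_iterate]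
      exact h.hσ.le.trans (h.hconv y)

namespace IsZeroMeanSolution

variable {f : ℝ → ℝ} {ν : ℝ} {u : ℝ → ℝ → ℝ} {t : ℝ}

lemma contDiff (h : IsZeroMeanSolution f ν u) (ht : 0 ≤ t) : ContDiff ℝ (⊤ : ℕ∞) (u t) :=
  contDiff_slice h.contDiffOn ht

lemma contDiffOn_Ioi (h : IsZeroMeanSolution f ν u) :
    ContDiffOn ℝ (⊤ : ℕ∞) (Function.uncurry u) (Ioi 0 ×ˢ univ) :=
  h.contDiffOn.mono (prod_mono Ioi_subset_Ici_self le_rfl)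

lemma deriv_time_eq (h : IsZeroMeanSolution f ν u) (hf : Differentiable ℝ f) (ht : 0 < t) :
    (fun y => deriv (fun s => u s y) t)
      = (fun y => ν * iteratedDeriv 2 (u t) y) - iteratedDeriv 1 (f ∘ u t) := by
  ext y
  have hcomp := deriv_comp y (hf (u t y)) ((h.contDiff ht.le).differentiable (by simp) y)
  simp only [Pi.sub_apply, iteratedDeriv_succ, iteratedDeriv_zero, hcomp]
  linarith [h.deriv_time_add t ht y]

lemma hasDerivAt_iteratedDeriv_time (h : IsZeroMeanSolution f ν u) (hf : ContDiff ℝ (⊤ : ℕ∞) f)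
    (ht : 0 < t) (k : ℕ) (x : ℝ) :
    HasDerivAt (fun s => iteratedDeriv k (u s) x)
      (ν * iteratedDeriv (k + 2) (u t) x - iteratedDeriv (k + 1) (f ∘ u t) x) t := by
  have hu := h.contDiff ht.le
  have hadd (g : ℝ → ℝ) (j : ℕ) :
      iteratedDeriv k (iteratedDeriv j g) = iteratedDeriv (k + j) g := by
    simp only [iteratedDeriv_eq_iterate, Function.iterate_add_apply]
  have hsmooth {g : ℝ → ℝ} (hg : ContDiff ℝ (⊤ : ℕ∞) g) (j : ℕ) :
      ContDiffAt ℝ k (iteratedDeriv j g) x := by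
    rw [iteratedDeriv_eq_iterate]
    exact (hg.iterate_deriv j).contDiffAt.of_le (mod_cast le_top)
  have htime := hasDerivAt_iteratedDeriv_slice isOpen_Ioi h.contDiffOn_Ioi ht k x
  rwa [h.deriv_time_eq (hf.differentiable (by simp)) ht,
    iteratedDeriv_sub (contDiffAt_const.mul (hsmooth hu 2)) (hsmooth (hf.comp hu) 1),
    iteratedDeriv_const_mul_field, hadd, hadd] at htime

lemma hasDerivAt_derivEnergy (h : IsZeroMeanSolution f ν u) (hf : ContDiff ℝ (⊤ : ℕ∞) f)
    (ht : 0 < t) (k : ℕ) :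
    HasDerivAt (fun s => derivEnergy (u s) k)
      (∫ x in (0 : ℝ)..1, 2 * iteratedDeriv k (u t) x *
        (ν * iteratedDeriv (k + 2) (u t) x - iteratedDeriv (k + 1) (f ∘ u t) x)) t := by
  have hsq (x : ℝ) := (h.hasDerivAt_iteratedDeriv_time hf ht k x).fun_pow 2
  have hint := hasDerivAt_integral_slice (w := fun s x => iteratedDeriv k (u s) x ^ 2) isOpen_Ioi
    ((contDiffOn_iteratedDeriv_slice isOpen_Ioi.uniqueDiffOn h.contDiffOn_Ioi k).pow 2) ht 0 1
  simpa only [derivEnergy, (hsq _).deriv, Nat.cast_ofNat, Nat.add_one_sub_one, pow_one] using hint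

lemma deriv_le (h : IsZeroMeanSolution f ν u) (hf : ContDiff ℝ (⊤ : ℕ∞) f)
    (hconv : ConvexOn ℝ univ f) (hν : 0 ≤ ν) {D : ℝ} (hD : ∀ x, deriv (u 0) x ≤ D) (ht : 0 ≤ t)
    (x : ℝ) : deriv (u t) x ≤ D := by
  have hper {s : ℝ} (hs : 0 ≤ s) : Function.Periodic (deriv (u s)) 1 :=
    iteratedDeriv_one (f := u s) ▸ periodic_iteratedDeriv (h.periodic s hs) 1
  obtain ⟨y, hy, hxy⟩ := (hper ht).exists_mem_Ico₀ zero_lt_one x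
  rw [hxy]
  refine le_of_parabolic_maximum_principle (w := fun s => deriv (u s)) isCompact_Icc
    ((contDiffOn_deriv_slice (uniqueDiffOn_Ici 0) h.contDiffOn).continuousOn.mono
      (prod_mono Icc_subset_Ici_self (subset_univ (Icc 0 1))))
    (fun s hs z _ => by
      simpa only [iteratedDeriv_one] using h.hasDerivAt_iteratedDeriv_time hf hs.1 1 z)
    (fun s hs z _ hmax => ?_) (fun z _ => hD z) (right_mem_Icc.2 ht) (Ico_subset_Icc_self hy)
  have hlocal : IsLocalMax (deriv (u s)) z := .of_forall fun r => by
    obtain ⟨r', hr', hrr'⟩ := (hper hs.1.le).exists_mem_Ico₀ zero_lt_one r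
    exact hrr' ▸ hmax (Ico_subset_Icc_self hr')
  have hu := h.contDiff hs.1.le
  have hthird : iteratedDeriv 3 (u s) z ≤ 0 := by
    simpa only [iteratedDeriv_succ, iteratedDeriv_zero] using
      deriv_deriv_nonpos_of_isLocalMax (hu.continuous_deriv (by simp)).continuousAt hlocal
  exact sub_nonpos.2 <| (mul_nonpos_of_nonneg_of_nonpos hν hthird).trans
    (iteratedDeriv_two_comp_nonneg hf hconv hu hlocal.deriv_eq_zero)

lemma isOneSidedProfile (h : IsZeroMeanSolution f ν u) (hf : ContDiff ℝ (⊤ : ℕ∞) f)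
    (hconv : ConvexOn ℝ univ f) (hν : 0 ≤ ν) {D : ℝ} (hD : ∀ x, deriv (u 0) x ≤ D) (ht : 0 ≤ t) :
    IsOneSidedProfile D (u t) where
  contDiff := h.contDiff ht
  periodic := h.periodic t ht
  integral_eq_zero := h.integral_eq_zero t ht
  deriv_le := h.deriv_le hf hconv hν hD ht

end IsZeroMeanSolution

lemma exists_derivEnergy_le_mul_inv_min_pow {f : ℝ → ℝ} (hf : ContDiff ℝ (⊤ : ℕ∞) f)
    (hconv : ConvexOn ℝ univ f) (D : ℝ) (M : ℕ) :
    ∃ C > 0, ∀ ν, 0 < ν → ∀ u, IsZeroMeanSolution f ν u → (∀ x, deriv (u 0) x ≤ D) →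
      ∀ t, 0 < t → derivEnergy (u t) (M + 1) ≤ C * (min ν t)⁻¹ ^ (2 * M + 1) := by
  obtain ⟨C, hC, hdissip⟩ := IsOneSidedProfile.exists_integral_dissipation_le hf D M
  set q := 2 * M + 1
  set L := 64 * D ^ 4 * (C + q) ^ q
  refine ⟨2 ^ q * (√L + 1), by positivity, fun ν hν u hu hD t ht => ?_⟩
  set τ := min ν t
  have hτpos : 0 < τ := lt_min hν ht
  have hτν : τ ≤ ν := min_le_left _ _
  have hτt : τ ≤ t := min_le_right _ _
  have hpos {s : ℝ} (hs : s ∈ Icc (t - τ / 2) t) : 0 < s := by linarith [hs.1]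
  have hprofile {s : ℝ} (hs : s ∈ Icc (t - τ / 2) t) : IsOneSidedProfile D (u s) :=
    hu.isOneSidedProfile hf hconv hν.le hD (hpos hs).le
  have hsq : ((t - (t - τ / 2)) ^ q * derivEnergy (u t) (M + 1)) ^ 2 ≤ L :=
    sq_sub_pow_mul_le_of_deriv_le (b := fun s => derivEnergy (u s) (M + 2)) (Nat.succ_ne_zero _)
      (by linarith) (by linarith) hC (by positivity)
      (fun s hs => hu.hasDerivAt_derivEnergy hf (hpos hs) (M + 1))
      (fun s _ => derivEnergy_nonneg _ _) (fun s _ => derivEnergy_nonneg _ _)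
      (fun s hs => (hprofile hs).derivEnergy_pow_le M)
      (fun s hs => hdissip (u s) (hprofile hs) ν hν)
  rw [sub_sub_cancel] at hsq
  have hroot : (τ / 2) ^ q * derivEnergy (u t) (M + 1) ≤ √L + 1 :=
    (Real.le_sqrt_of_sq_le hsq).trans (le_add_of_nonneg_right zero_le_one)
  calc derivEnergy (u t) (M + 1)
      = 2 ^ q * ((τ / 2) ^ q * derivEnergy (u t) (M + 1)) * τ⁻¹ ^ q := by
        rw [div_pow, inv_pow]
        field_simp
    _ ≤ 2 ^ q * (√L + 1) * τ⁻¹ ^ q := by gcongr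

theorem statement5_general {f : ℝ → ℝ} (hf : ContDiff ℝ (⊤ : ℕ∞) f) (hconv : ConvexOn ℝ univ f)
    (D : ℝ) {m : ℕ} (hm : 1 ≤ m) :
    ∃ C > 0, ∀ ν, 0 < ν → ∀ u, IsZeroMeanSolution f ν u → (∀ x, deriv (u 0) x ≤ D) →
      ∀ t, 0 < t → sobLp m 2 (u t) ^ 2
        ≤ C * max (ν ^ (-(2 * (m : ℝ) - 1))) (t ^ (-(2 * (m : ℝ) - 1))) := by
  obtain ⟨M, rfl⟩ := Nat.exists_eq_add_of_le' hm
  obtain ⟨C, hC, hbound⟩ := exists_derivEnergy_le_mul_inv_min_pow hf hconv D M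
  refine ⟨C, hC, fun ν hν u hu hD t ht => ?_⟩
  have hexp : 2 * ((M + 1 : ℕ) : ℝ) - 1 = (2 * M + 1 : ℕ) := by push_cast; ring
  have hpow : (min ν t)⁻¹ ^ (2 * M + 1) = min ν t ^ (-(2 * ((M + 1 : ℕ) : ℝ) - 1)) := by
    rw [hexp, Real.rpow_neg (lt_min hν ht).le, Real.rpow_natCast, inv_pow]
  rw [sobLp_two_sq_eq_derivEnergy (hu.contDiff ht.le)]
  refine (hbound ν hν u hu hD t ht).trans (mul_le_mul_of_nonneg_left ?_ hC.le)
  rw [hpow]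
  rcases min_choice ν t with hmin | hmin <;> rw [hmin]
  exacts [le_max_left _ _, le_max_right _ _]

/-- For every integer `m ≥ 2` there is `C > 0` depending only on
`f`, `D`, `m` such that for every `ν ∈ (0,1]` and every `t > 0`,
`‖u(t)‖_m² ≤ C max(ν^{-(2m-1)}, t^{-(2m-1)})`. -/
theorem statement5 (f : ℝ → ℝ) (σ D : ℝ) (m : ℕ) (hm : 2 ≤ m) :
    ∃ C > 0, ∀ ν, 0 < ν → ν ≤ 1 →
      ∀ u : ℝ → ℝ → ℝ, IsBurgersSolution f σ ν u → burgersD u = D →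
        ∀ t, 0 < t →
          sobLp m 2 (u t) ^ 2
            ≤ C * max (ν ^ (-(2 * (m : ℝ) - 1))) (t ^ (-(2 * (m : ℝ) - 1))) := by
  by_cases hexists : ∃ ν u, IsBurgersSolution f σ ν u
  · obtain ⟨_, _, hsol⟩ := hexists
    obtain ⟨C, hC, hbound⟩ := statement5_general hsol.hf hsol.convexOn D (one_le_two.trans hm)
    refine ⟨C, hC, fun ν hν _ u hu hD => hbound ν hν u hu.isZeroMeanSolution fun x => ?_⟩
    exact (deriv_le_sobLp_one_top (hu.isZeroMeanSolution.contDiff le_rfl) (hu.hper 0) x).trans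
      (hD ▸ le_max_right _ _)
  · exact ⟨1, one_pos, fun ν _ _ u hu => absurd ⟨ν, u, hu⟩ hexists⟩
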